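/- For every composition σ = (r_1,...,r_k) of a positive integer n and its reversal rev(σ) = (r_k,...,r_1), one has h_i(σ) = h_i(rev(σ)) for all 0 ≤ i ≤ n. -/

import Mathlib

open Finset Polynomial

/-- `pSum σ i = r₁ + ⋯ + rᵢ`, the `i`-th partial sum of the composition `σ`. -/
def pSum (σ : List ℕ) (i : ℕ) : ℕ := (σ.take i).sum

/-- Membership in the set `P_σ ⊆ ℕⁿ`: the partial sum of the first `s_i`
coordinates is at most `s_i` for every `i ∈ [k]`. -/
def memP (n : ℕ) (σ : List ℕ) (a : Fin n → ℕ) : Prop :=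
  ∀ i, 1 ≤ i → i ≤ σ.length →
    (∑ j ∈ Finset.univ.filter (fun j : Fin n => (j : ℕ) < pSum σ i), a j) ≤ pSum σ i

/-- The number of nonzero coordinates of a tuple. -/
def nonzeroCount {n : ℕ} (a : Fin n → ℕ) : ℕ :=
  (Finset.univ.filter (fun j => a j ≠ 0)).card

/-- `h_i(σ)`: the number of points of `P_σ` with exactly `i` nonzero coordinates. -/
noncomputable def hVec (n : ℕ) (σ : List ℕ) (i : ℕ) : ℕ :=
  {a : Fin n → ℕ | memP n σ a ∧ nonzeroCount a = i}.ncard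

/-!
A tuple is determined by its prefix sums, a monotone function vanishing at `0`; read backwards from
the corner `(m, n)`, the upper adjoint of such a function is again of this kind. Explicitly,
`a : Fin m → ℕ` with sum at most `n` has a dual `b : Fin n → ℕ`, where `b j` is the multiplicity of
`n - j` among the nonempty prefix sums of `a`, and
`b 0 + ⋯ + b (s - 1) ≤ t ↔ a 0 + ⋯ + a (m - t - 1) ≤ n - s`.
This equivalence makes duality an involution, and for `m = n` and `s = t` it exchanges the
inequality at `s` with the one at `n - s`, hence `P_σ` with `P_{rev σ}`. If `b j ≠ 0`, then the
positive number `n - j` is a prefix sum of `a` and is first reached at a nonzero entry; so duality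
does not increase the number of nonzero entries and, being an involution, preserves it.
-/

/-- The sum of the first `s` coordinates of `a`, in the form in which it occurs in `memP`; for
`s > m` it is the sum of all coordinates. -/
def prefixSum {m : ℕ} (a : Fin m → ℕ) (s : ℕ) : ℕ :=
  ∑ j ∈ ({j | (j : ℕ) < s} : Finset (Fin m)), a j

/-- The dual of a tuple `a : Fin m → ℕ` of sum at most `n`: its `j`-th coordinate is the number of
nonempty prefixes of `a` with sum `n - j`. In terms of prefix sums this is the Galois adjoint with
both axes reversed, see `prefixSum_dualTuple_le_iff`. -/
def dualTuple {m : ℕ} (n : ℕ) (a : Fin m → ℕ) (j : Fin n) : ℕ :=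
  #{u : Fin m | prefixSum a (u + 1) = n - j}

section PrefixSum

variable {m : ℕ} (a : Fin m → ℕ)

lemma prefixSum_zero : prefixSum a 0 = 0 := by
  simp [prefixSum]

lemma prefixSum_succ (j : Fin m) : prefixSum a (j + 1) = prefixSum a j + a j := by
  have h : ({k | (k : ℕ) < j + 1} : Finset (Fin m)) =
      insert j ({k | (k : ℕ) < j} : Finset (Fin m)) := by
    ext k
    simp [le_iff_eq_or_lt, Fin.val_inj]
  rw [prefixSum, h, sum_insert (by simp), add_comm, prefixSum]

lemma prefixSum_mono : Monotone (prefixSum a) := fun _ _ hst =>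
  sum_le_sum_of_subset <| monotone_filter_right univ fun _ _ (hj : _ < _) => hj.trans_le hst

lemma prefixSum_of_le {s : ℕ} (hs : m ≤ s) : prefixSum a s = prefixSum a m := by
  simp only [prefixSum]
  congr 1
  grind

lemma prefixSum_sub_sub (s : ℕ) : prefixSum a (m - (m - s)) = prefixSum a s := by
  obtain hs | hs := le_total m s
  · rw [Nat.sub_eq_zero_of_le hs, Nat.sub_zero, prefixSum_of_le a hs]
  · rw [Nat.sub_sub_self hs]

lemma prefixSum_le_prefixSum_length (s : ℕ) : prefixSum a s ≤ prefixSum a m := by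
  rw [← prefixSum_sub_sub]
  exact prefixSum_mono a (Nat.sub_le _ _)

lemma prefixSum_injective : Function.Injective (prefixSum (m := m)) := by
  intro a b h
  ext j
  have hj := prefixSum_succ a j
  rw [h, prefixSum_succ] at hj
  exact (Nat.add_left_cancel hj).symm

lemma exists_ne_zero_prefixSum_succ_eq {s : ℕ} (hs : 0 < prefixSum a s) :
    ∃ k, a k ≠ 0 ∧ prefixSum a (k + 1) = prefixSum a s := by
  induction s with
  | zero => simp [prefixSum_zero] at hs
  | succ s ih =>
    by_cases hsm : s < m
    · have hsucc := prefixSum_succ a ⟨s, hsm⟩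
      by_cases has : a ⟨s, hsm⟩ = 0
      · rw [has, add_zero] at hsucc
        rw [hsucc] at hs ⊢
        exact ih hs
      · exact ⟨_, has, rfl⟩
    · rw [prefixSum_of_le a (by lia : m ≤ s + 1), ← prefixSum_of_le a (not_lt.mp hsm)] at hs ⊢
      exact ih hs

lemma card_lt_prefixSum_succ_le_iff (c t : ℕ) :
    #{u : Fin m | c < prefixSum a (u + 1)} ≤ t ↔ prefixSum a (m - t) ≤ c := by
  have hcard := card_filter_add_card_filter_not (s := (univ : Finset (Fin m)))
    (fun u => prefixSum a (u + 1) ≤ c)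
  simp only [not_le, card_univ, Fintype.card_fin] at hcard
  obtain ht | ht := le_or_gt m t
  · simp only [Nat.sub_eq_zero_of_le ht, prefixSum_zero, zero_le, iff_true]
    lia
  · have hmono : Monotone fun u : Fin m => prefixSum a (u + 1) := fun _ _ huv =>
      prefixSum_mono a (Nat.succ_le_succ huv)
    have hlt := Tuple.lt_card_le_iff_apply_le_of_monotone (j := ⟨m - t - 1, by lia⟩) (a := c) hmono
    simp only [Nat.sub_add_cancel (Nat.sub_pos_of_lt ht)] at hlt
    rw [← hlt]
    lia

end PrefixSum

section Dual

variable {m n : ℕ} {a : Fin m → ℕ}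

lemma prefixSum_dualTuple (ha : prefixSum a m ≤ n) (s : ℕ) :
    prefixSum (dualTuple n a) s = #{u : Fin m | n - s < prefixSum a (u + 1)} := by
  let fiber (j : Fin n) : Finset (Fin m) := {u | prefixSum a (u + 1) = n - j}
  have hdisj : (({j | (j : ℕ) < s} : Finset (Fin n)) : Set (Fin n)).PairwiseDisjoint fiber := by
    intro j _ k _ hjk
    rw [Function.onFun, disjoint_filter]
    grind
  have hunion : ({j | (j : ℕ) < s} : Finset (Fin n)).biUnion fiber =
      ({u | n - s < prefixSum a (u + 1)} : Finset (Fin m)) := by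
    ext u
    have hu : prefixSum a (u + 1) ≤ n := (prefixSum_le_prefixSum_length a _).trans ha
    simp only [fiber, mem_biUnion, mem_filter_univ]
    constructor
    · grind
    · intro h
      exact ⟨⟨n - prefixSum a (u + 1), by lia⟩, by grind, by grind⟩
  rw [← hunion, card_biUnion hdisj]
  rfl

lemma prefixSum_dualTuple_le_iff (ha : prefixSum a m ≤ n) (s t : ℕ) :
    prefixSum (dualTuple n a) s ≤ t ↔ prefixSum a (m - t) ≤ n - s := by
  rw [prefixSum_dualTuple ha, card_lt_prefixSum_succ_le_iff]

lemma prefixSum_dualTuple_le (ha : prefixSum a m ≤ n) : prefixSum (dualTuple n a) n ≤ m := by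
  simp [prefixSum_dualTuple_le_iff ha, prefixSum_zero]

lemma dualTuple_dualTuple (ha : prefixSum a m ≤ n) : dualTuple m (dualTuple n a) = a := by
  refine prefixSum_injective <| funext fun s => eq_of_forall_ge_iff fun t => ?_
  rw [prefixSum_dualTuple_le_iff (prefixSum_dualTuple_le ha), prefixSum_dualTuple_le_iff ha,
    prefixSum_sub_sub]
  have hs : prefixSum a s ≤ n := (prefixSum_le_prefixSum_length a s).trans ha
  lia

lemma exists_ne_zero_of_dualTuple_ne_zero {j : Fin n} (hj : dualTuple n a j ≠ 0) :
    ∃ k, a k ≠ 0 ∧ prefixSum a (k + 1) = n - j := by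
  obtain ⟨u, hu⟩ := card_ne_zero.mp hj
  rw [mem_filter_univ] at hu
  rw [← hu]
  exact exists_ne_zero_prefixSum_succ_eq a (hu ▸ Nat.sub_pos_of_lt j.isLt)

variable (n a) in
lemma nonzeroCount_dualTuple_le : nonzeroCount (dualTuple n a) ≤ nonzeroCount a := by
  refine card_le_card_of_forall_subsingleton
    (fun (j : Fin n) (k : Fin m) => prefixSum a (k + 1) = n - j) (fun j hj => ?_) ?_
  · simpa using exists_ne_zero_of_dualTuple_ne_zero (mem_filter_univ j |>.mp hj)
  · rintro k - i ⟨-, hi⟩ j ⟨-, hj⟩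
    grind

lemma nonzeroCount_dualTuple (ha : prefixSum a m ≤ n) :
    nonzeroCount (dualTuple n a) = nonzeroCount a := by
  refine (nonzeroCount_dualTuple_le n a).antisymm ?_
  simpa [dualTuple_dualTuple ha] using nonzeroCount_dualTuple_le m (dualTuple n a)

end Dual

lemma pSum_le_sum (σ : List ℕ) (i : ℕ) : pSum σ i ≤ σ.sum :=
  (List.take_sublist i σ).sum_le_sum fun _ _ => Nat.zero_le _

lemma pSum_reverse (σ : List ℕ) (i : ℕ) :
    pSum σ.reverse i = σ.sum - pSum σ (σ.length - i) := by
  have h := List.sum_take_add_sum_drop σ (σ.length - i)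
  rw [pSum, pSum, List.take_reverse, List.sum_reverse]
  lia

section MemP

variable {n : ℕ} {σ : List ℕ} {a : Fin n → ℕ}

lemma memP_iff : memP n σ a ↔ ∀ i ≤ σ.length, prefixSum a (pSum σ i) ≤ pSum σ i := by
  refine ⟨fun h i hi => ?_, fun h i _ hi => h i hi⟩
  obtain rfl | hpos := Nat.eq_zero_or_pos i
  · simp [pSum, prefixSum_zero]
  · exact h i hpos hi

lemma prefixSum_le_of_memP (ha : memP n σ a) (hsum : σ.sum = n) : prefixSum a n ≤ n := by
  simpa [pSum, hsum] using memP_iff.mp ha σ.length le_rfl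

lemma memP_reverse_dualTuple (ha : memP n σ a) (hsum : σ.sum = n) :
    memP n σ.reverse (dualTuple n a) := by
  refine memP_iff.mpr fun i _ => ?_
  rw [prefixSum_dualTuple_le_iff (prefixSum_le_of_memP ha hsum), pSum_reverse, hsum,
    Nat.sub_sub_self (hsum ▸ pSum_le_sum σ _)]
  exact memP_iff.mp ha _ (Nat.sub_le _ _)

lemma mapsTo_dualTuple (hsum : σ.sum = n) (i : ℕ) :
    Set.MapsTo (dualTuple n) {a : Fin n → ℕ | memP n σ a ∧ nonzeroCount a = i}
      {a | memP n σ.reverse a ∧ nonzeroCount a = i} := fun _ ⟨ha, hi⟩ =>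
  ⟨memP_reverse_dualTuple ha hsum,
    (nonzeroCount_dualTuple (prefixSum_le_of_memP ha hsum)).trans hi⟩

lemma leftInvOn_dualTuple (hsum : σ.sum = n) (i : ℕ) :
    Set.LeftInvOn (dualTuple n) (dualTuple n)
      {a : Fin n → ℕ | memP n σ a ∧ nonzeroCount a = i} := fun _ ⟨ha, _⟩ =>
  dualTuple_dualTuple (prefixSum_le_of_memP ha hsum)

end MemP

/-- `h_i(σ) = h_i(rev(σ))` for all `0 ≤ i ≤ n`. -/
theorem hVec_reverse (n : ℕ) (hn : 0 < n) (σ : List ℕ)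
    (hpos : ∀ r ∈ σ, 0 < r) (hsum : σ.sum = n) :
    ∀ i ≤ n, hVec n σ i = hVec n σ.reverse i := by
  intro i _
  have hrev : σ.reverse.sum = n := by rw [List.sum_reverse, hsum]
  have hinv := leftInvOn_dualTuple hsum i
  have hinv' := leftInvOn_dualTuple hrev i
  have hmaps := mapsTo_dualTuple hsum i
  have hmaps' := mapsTo_dualTuple hrev i
  rw [List.reverse_reverse] at hmaps'
  exact (Set.InvOn.bijOn ⟨hinv, hinv'⟩ hmaps hmaps').ncard_eq
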